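/- arXiv:2406.00982 — 6 statements merged into one kernel-verified Lean document; each statement's English description precedes it below -/
import Mathlib

section
/- Let U, V ⊆ ℝⁿ be open sets, let φ : U → V be a diffeomorphism, and let Tφ : U × ℝⁿ → V × ℝⁿ denote the tangent lift Tφ(x,v) := (φ(x), Dφ(x)·v), which is a diffeomorphism onto its image. If R_d is a discretization map on U, then the map R_{d,φ} := (φ × φ) ∘ R_d ∘ (Tφ)⁻¹, defined on the image under Tφ of the domain of R_d, is a discretization map on V. -/
/-! The tangent lift is functorial, so by the chain rule `Tψ` is a two-sided inverse of `Tφ`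
(`fderiv_inverse_apply`, `tangentLift_inverse`). Hence the image `Tφ(O)` is the preimage of `O`
under the continuous map `Tψ` (`tangentLift_image_eq`), which makes it open, and the lifted map is
smooth as a composition of smooth maps. Condition (i) holds because `Tψ(y, 0) = (ψ y, 0)`. For
condition (ii), put `x = ψ y`; since `Rd (x, 0) = (x, x)`, both components of the lifted map have
fibre derivative `Dφ(x) ∘ Dᵢ ∘ Dψ(y)` with the same outer factor `Dφ(x)`, so their difference is
`Dφ(x) ∘ (D₂ - D₁) ∘ Dψ(y) = Dφ(x) ∘ Dψ(y) = id`. -/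

/-- A discretization map on an open set `U ⊆ ℝⁿ`. -/
def IsDiscretizationMap {n : ℕ} (U : Set (Fin n → ℝ))
    (O : Set ((Fin n → ℝ) × (Fin n → ℝ)))
    (Rd : ((Fin n → ℝ) × (Fin n → ℝ)) → ((Fin n → ℝ) × (Fin n → ℝ))) : Prop :=
  IsOpen O ∧ O ⊆ U ×ˢ (Set.univ : Set (Fin n → ℝ)) ∧
  (∀ x ∈ U, ((x, (0 : Fin n → ℝ))) ∈ O) ∧
  ContDiffOn ℝ (⊤ : ℕ∞) Rd O ∧
  (∀ p ∈ O, (Rd p).1 ∈ U ∧ (Rd p).2 ∈ U) ∧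
  (∀ x ∈ U, Rd (x, 0) = (x, x)) ∧
  (∀ x ∈ U,
    fderiv ℝ (fun v => (Rd (x, v)).2) 0 - fderiv ℝ (fun v => (Rd (x, v)).1) 0
      = ContinuousLinearMap.id ℝ (Fin n → ℝ))

/-- The tangent lift `Tφ(x,v) := (φ(x), Dφ(x)·v)` of a map `φ`. -/
noncomputable def tangentLift {n : ℕ} (φ : (Fin n → ℝ) → (Fin n → ℝ)) :
    ((Fin n → ℝ) × (Fin n → ℝ)) → ((Fin n → ℝ) × (Fin n → ℝ)) :=
  fun p => (φ p.1, fderiv ℝ φ p.1 p.2)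

lemma differentiableAt_of_smoothOn {n : ℕ} {U : Set (Fin n → ℝ)} (hU : IsOpen U)
    {φ : (Fin n → ℝ) → (Fin n → ℝ)} (hφ : ContDiffOn ℝ (⊤ : ℕ∞) φ U)
    {x : Fin n → ℝ} (hx : x ∈ U) : DifferentiableAt ℝ φ x :=
  (hφ.contDiffAt (hU.mem_nhds hx)).differentiableAt (by simp)

lemma fderiv_inverse_apply {n : ℕ} {U V : Set (Fin n → ℝ)} (hU : IsOpen U) (hV : IsOpen V)
    {φ ψ : (Fin n → ℝ) → (Fin n → ℝ)}
    (hφ : ContDiffOn ℝ (⊤ : ℕ∞) φ U) (hψ : ContDiffOn ℝ (⊤ : ℕ∞) ψ V)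
    (hmaps : Set.MapsTo φ U V) (hψφ : ∀ x ∈ U, ψ (φ x) = x)
    {x : Fin n → ℝ} (hx : x ∈ U) (v : Fin n → ℝ) :
    fderiv ℝ ψ (φ x) (fderiv ℝ φ x v) = v := by
  have h1 := (differentiableAt_of_smoothOn hV hψ (hmaps hx)).hasFDerivAt.comp x
    (differentiableAt_of_smoothOn hU hφ hx).hasFDerivAt
  have h2 : HasFDerivAt (ψ ∘ φ) (ContinuousLinearMap.id ℝ (Fin n → ℝ)) x :=
    (hasFDerivAt_id x).congr_of_eventuallyEq
      (Filter.eventually_of_mem (hU.mem_nhds hx) hψφ)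
  exact congrArg (fun L : (Fin n → ℝ) →L[ℝ] (Fin n → ℝ) => L v) (h1.unique h2)

lemma tangentLift_inverse {n : ℕ} {U V : Set (Fin n → ℝ)} (hU : IsOpen U) (hV : IsOpen V)
    {φ ψ : (Fin n → ℝ) → (Fin n → ℝ)}
    (hφ : ContDiffOn ℝ (⊤ : ℕ∞) φ U) (hψ : ContDiffOn ℝ (⊤ : ℕ∞) ψ V)
    (hmaps : Set.MapsTo φ U V) (hψφ : ∀ x ∈ U, ψ (φ x) = x)
    {p : (Fin n → ℝ) × (Fin n → ℝ)} (hp : p.1 ∈ U) :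
    tangentLift ψ (tangentLift φ p) = p :=
  Prod.ext (hψφ _ hp) (fderiv_inverse_apply hU hV hφ hψ hmaps hψφ hp _)

lemma contDiffOn_tangentLift {n : ℕ} {U : Set (Fin n → ℝ)} (hU : IsOpen U)
    {φ : (Fin n → ℝ) → (Fin n → ℝ)} (hφ : ContDiffOn ℝ (⊤ : ℕ∞) φ U) :
    ContDiffOn ℝ (⊤ : ℕ∞) (tangentLift φ) (U ×ˢ (Set.univ : Set (Fin n → ℝ))) := by
  have hm : Set.MapsTo (Prod.fst : (Fin n → ℝ) × (Fin n → ℝ) → _)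
      (U ×ˢ (Set.univ : Set (Fin n → ℝ))) U := fun p hp => hp.1
  have hD : ContDiffOn ℝ (⊤ : ℕ∞) (fderiv ℝ φ) U := hφ.fderiv_of_isOpen hU (by simp)
  exact (hφ.comp contDiffOn_fst hm).prodMk ((hD.comp contDiffOn_fst hm).clm_apply contDiffOn_snd)

lemma tangentLift_image_eq {n : ℕ} {U V : Set (Fin n → ℝ)} (hU : IsOpen U) (hV : IsOpen V)
    {φ ψ : (Fin n → ℝ) → (Fin n → ℝ)}
    (hφ : ContDiffOn ℝ (⊤ : ℕ∞) φ U) (hψ : ContDiffOn ℝ (⊤ : ℕ∞) ψ V)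
    (hφm : Set.MapsTo φ U V) (hψm : Set.MapsTo ψ V U)
    (hψφ : ∀ x ∈ U, ψ (φ x) = x) (hφψ : ∀ y ∈ V, φ (ψ y) = y)
    {O : Set ((Fin n → ℝ) × (Fin n → ℝ))} (hO : O ⊆ U ×ˢ (Set.univ : Set (Fin n → ℝ))) :
    tangentLift φ '' O = (V ×ˢ (Set.univ : Set (Fin n → ℝ))) ∩ tangentLift ψ ⁻¹' O := by
  ext q
  constructor
  · rintro ⟨p, hp, rfl⟩
    refine ⟨⟨hφm (hO hp).1, trivial⟩, ?_⟩
    rw [Set.mem_preimage, tangentLift_inverse hU hV hφ hψ hφm hψφ (hO hp).1]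
    exact hp
  · rintro ⟨hq, hqO⟩
    exact ⟨_, hqO, tangentLift_inverse hV hU hψ hφ hψm hφψ hq.1⟩

/-- The chain rule along a fibre, for `g` one component of a discretization map at `x`
and `A` the derivative of the inverse diffeomorphism. -/
lemma fderiv_comp_fibre {n : ℕ} {φ g : (Fin n → ℝ) → (Fin n → ℝ)} {x : Fin n → ℝ}
    (A : (Fin n → ℝ) →L[ℝ] (Fin n → ℝ)) (hφ : DifferentiableAt ℝ φ x)
    (hg : DifferentiableAt ℝ g 0) (hg0 : g 0 = x) :
    fderiv ℝ (fun v => φ (g (A v))) 0 = (fderiv ℝ φ x).comp ((fderiv ℝ g 0).comp A) := by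
  have hgA : HasFDerivAt (fun v => g (A v)) ((fderiv ℝ g 0).comp A) 0 := by
    refine HasFDerivAt.comp (g := g) (0 : Fin n → ℝ) ?_ A.hasFDerivAt
    rw [map_zero]
    exact hg.hasFDerivAt
  refine HasFDerivAt.fderiv (HasFDerivAt.comp (g := φ) (0 : Fin n → ℝ) ?_ hgA)
  rw [map_zero, hg0]
  exact hφ.hasFDerivAt

/-- Lift of discretization maps: if `φ : U → V` is a diffeomorphism (with smooth inverse `ψ`)
and `Rd` is a discretization map on `U`, then `R_{d,φ} := (φ × φ) ∘ Rd ∘ (Tφ)⁻¹`, defined on the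
image under `Tφ` of the domain of `Rd`, is a discretization map on `V`.  Here `(Tφ)⁻¹` is the
tangent lift `Tψ` of the inverse `ψ` of `φ`. -/
theorem lift_of_discretization_map {n : ℕ}
    (U V : Set (Fin n → ℝ)) (hU : IsOpen U) (hV : IsOpen V)
    (φ ψ : (Fin n → ℝ) → (Fin n → ℝ))
    (hφsmooth : ContDiffOn ℝ (⊤ : ℕ∞) φ U)
    (hψsmooth : ContDiffOn ℝ (⊤ : ℕ∞) ψ V)
    (hφmaps : φ '' U = V)
    (hψφ : ∀ x ∈ U, ψ (φ x) = x)
    (hφψ : ∀ y ∈ V, φ (ψ y) = y)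
    (O : Set ((Fin n → ℝ) × (Fin n → ℝ)))
    (Rd : ((Fin n → ℝ) × (Fin n → ℝ)) → ((Fin n → ℝ) × (Fin n → ℝ)))
    (hRd : IsDiscretizationMap U O Rd) :
    IsDiscretizationMap V (tangentLift φ '' O)
      (fun p => ((φ (Rd (tangentLift ψ p)).1, φ (Rd (tangentLift ψ p)).2))) := by
  obtain ⟨hOo, hOU, hO0, hRs, hRm, hR0, hRD⟩ := hRd
  have hφm : Set.MapsTo φ U V := fun x hx => hφmaps ▸ Set.mem_image_of_mem φ hx
  have hψm : Set.MapsTo ψ V U := by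
    rw [← hφmaps]
    rintro _ ⟨x, hx, rfl⟩
    rw [hψφ x hx]
    exact hx
  have himg := tangentLift_image_eq hU hV hφsmooth hψsmooth hφm hψm hψφ hφψ hOU
  have hTψ := contDiffOn_tangentLift hV hψsmooth
  have hT0 : ∀ y, tangentLift ψ (y, 0) = (ψ y, 0) := fun y => by simp [tangentLift]
  rw [himg]
  refine ⟨hTψ.continuousOn.isOpen_inter_preimage (hV.prod isOpen_univ) hOo,
    Set.inter_subset_left, ?_, ?_, ?_, ?_, ?_⟩
  · intro y hy
    refine ⟨⟨hy, trivial⟩, ?_⟩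
    rw [Set.mem_preimage, hT0]
    exact hO0 _ (hψm hy)
  · have hRT : ContDiffOn ℝ (⊤ : ℕ∞) (fun p => Rd (tangentLift ψ p))
        ((V ×ˢ (Set.univ : Set (Fin n → ℝ))) ∩ tangentLift ψ ⁻¹' O) :=
      hRs.comp (hTψ.mono Set.inter_subset_left) fun p hp => hp.2
    exact (hφsmooth.comp hRT.fst fun p hp => (hRm _ hp.2).1).prodMk
      (hφsmooth.comp hRT.snd fun p hp => (hRm _ hp.2).2)
  · intro p hp
    exact ⟨hφm (hRm _ hp.2).1, hφm (hRm _ hp.2).2⟩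
  · intro y hy
    simp only [hT0, hR0 _ (hψm hy), hφψ y hy]
  · intro y hy
    have hx := hψm hy
    have hRd0 : DifferentiableAt ℝ (fun v => Rd (ψ y, v)) 0 :=
      ((hRs.contDiffAt (hOo.mem_nhds (hO0 _ hx))).differentiableAt (by simp)).comp
        (0 : Fin n → ℝ) ((differentiableAt_const _).prodMk differentiableAt_id)
    have hφd := differentiableAt_of_smoothOn hU hφsmooth hx
    have h1 := fderiv_comp_fibre (g := fun v => (Rd (ψ y, v)).1) (fderiv ℝ ψ y) hφd
      hRd0.fst (by simp [hR0 _ hx])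
    have h2 := fderiv_comp_fibre (g := fun v => (Rd (ψ y, v)).2) (fderiv ℝ ψ y) hφd
      hRd0.snd (by simp [hR0 _ hx])
    simp only [tangentLift]
    rw [h1, h2, ← ContinuousLinearMap.comp_sub, ← ContinuousLinearMap.sub_comp, hRD _ hx]
    ext1 v
    exact fderiv_inverse_apply hV hU hψsmooth hφsmooth hψm hφψ hy v
end

section
/- Let U ⊆ ℝⁿ be open, let R_d be a C² discretization map on U which is a diffeomorphism from its domain onto an open neighborhood of the diagonal of U × U, and let F : U × ℝᵐ → ℝⁿ be C¹. Fix u ∈ ℝᵐ, x₀ ∈ U, and let t ↦ x(t) be the solution of ẋ = F(x,u) with x(0) = x₀. For h > 0, call x₁ an output of the induced scheme at x₀ if R_d⁻¹(x₀, x₁) = h·F(y, u) in the fiber over y, where y is the first component (base point) of R_d⁻¹(x₀, x₁); that is, there exists y ∈ U with R_d(y, h·F(y,u)) = (x₀, x₁). Then the scheme is first-order accurate: there exist constants K > 0 and h₀ > 0 such that for every 0 < h < h₀ there exists an output x₁ of the scheme at x₀ satisfying ‖x(h) − x₁‖ ≤ K·h². -/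
/-!
The scheme solves `Rd¹(y, h F(y,u)) = x₀` for the base point `y` and returns
`x₁ = Rd²(y, h F(y,u))`. Since `Rd¹(y, 0) = y`, the implicit function theorem gives a solution
`y = y(h)`, differentiable at `h = 0`, with `y(0) = x₀`, hence `y(h) - x₀ = O(h)`
(`exists_basePoint`).

Put `D = Rd² - Rd¹`. Then `D(y, 0) = 0` and `∂ᵥD(y, 0) = id`, and the derivative of `D` is locally
Lipschitz because `D` is `C²`, so `D(y, v) = v + O(‖v‖²)` uniformly for `y` near `x₀`
(`isBigO_sub_snd`). Therefore `x₁ - x₀ = h F(y(h),u) + O(h²) = h F(x₀,u) + O(h²)`. The exact solution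
has the same expansion (`isBigO_solution`), and subtracting the two gives the claim.
-/

/-- A `C²` discretization map on an open set `U ⊆ ℝⁿ`. -/
def IsC2DiscretizationMap {n : ℕ} (U : Set (Fin n → ℝ))
    (O : Set ((Fin n → ℝ) × (Fin n → ℝ)))
    (Rd : ((Fin n → ℝ) × (Fin n → ℝ)) → ((Fin n → ℝ) × (Fin n → ℝ))) : Prop :=
  IsOpen O ∧ O ⊆ U ×ˢ (Set.univ : Set (Fin n → ℝ)) ∧
  (∀ x ∈ U, ((x, (0 : Fin n → ℝ))) ∈ O) ∧
  ContDiffOn ℝ 2 Rd O ∧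
  (∀ p ∈ O, (Rd p).1 ∈ U ∧ (Rd p).2 ∈ U) ∧
  (∀ x ∈ U, Rd (x, 0) = (x, x)) ∧
  (∀ x ∈ U,
    fderiv ℝ (fun v => (Rd (x, v)).2) 0 - fderiv ℝ (fun v => (Rd (x, v)).1) 0
      = ContinuousLinearMap.id ℝ (Fin n → ℝ))

open Filter Asymptotics
open scoped Topology

/-- Second-order expansion in the fibre variable, uniform in the base point: on a small ball the
derivative of `D` is Lipschitz, so along the fibre over `y` it differs from its value at `(y, 0)`
by `O(‖v‖)`, and the mean value inequality applies. -/
lemma isBigO_sub_snd {E : Type*} [NormedAddCommGroup E] [NormedSpace ℝ E]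
    {D : E × E → E} {x₀ : E} (hD : ContDiffAt ℝ 2 D (x₀, 0))
    (h0 : ∀ᶠ y in 𝓝 x₀, D (y, 0) = 0)
    (h1 : ∀ᶠ y in 𝓝 x₀, ∀ w, fderiv ℝ D (y, 0) (0, w) = w) :
    (fun p : E × E => D p - p.2) =O[𝓝 (x₀, 0)] fun p => ‖p.2‖ ^ 2 := by
  have hC1 : ContDiffAt ℝ 1 (fderiv ℝ D) (x₀, 0) := hD.fderiv_right (by norm_num)
  obtain ⟨L, t, ht, hL⟩ := hC1.exists_lipschitzOnWith
  have hdiff : ∀ᶠ p in 𝓝 ((x₀, 0) : E × E), DifferentiableAt ℝ D p :=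
    (hD.eventually (by simp)).mono fun p hp => hp.differentiableAt (by norm_num)
  obtain ⟨r, hr, hball⟩ := Metric.mem_nhds_iff.1 (inter_mem ht hdiff)
  have hev : ∀ᶠ p in 𝓝 ((x₀, 0) : E × E), D (p.1, 0) = 0 ∧
      ∀ w, fderiv ℝ D (p.1, 0) (0, w) = w :=
    (continuous_fst.tendsto ((x₀, 0) : E × E)).eventually (h0.and h1)
  refine IsBigO.of_bound L ?_
  filter_upwards [hev, Metric.ball_mem_nhds _ hr] with p hp hpr
  obtain ⟨y, v⟩ := p
  obtain ⟨hp0, hp1⟩ := hp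
  simp only at hp0 hp1 ⊢
  rw [← ball_prod_same] at hball hpr
  obtain ⟨hy, hv⟩ := hpr
  simp only at hy hv
  have hin : ∀ w ∈ segment ℝ (0 : E) v, (y, w) ∈ t ∧ DifferentiableAt ℝ D (y, w) := by
    intro w hw
    exact hball ⟨hy, (convex_ball (0 : E) r).segment_subset (Metric.mem_ball_self hr) hv hw⟩
  have hnorm : ∀ w ∈ segment ℝ (0 : E) v, ‖w‖ ≤ ‖v‖ := by
    intro w hw
    have := (convex_closedBall (0 : E) ‖v‖).segment_subset
      (Metric.mem_closedBall_self (norm_nonneg v)) (by simp) hw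
    simpa using this
  have hder : ∀ w ∈ segment ℝ (0 : E) v,
      HasFDerivWithinAt (fun w => D (y, w)) ((fderiv ℝ D (y, w)).comp (.inr ℝ E E))
        (segment ℝ 0 v) w := by
    intro w hw
    exact ((hin w hw).2.hasFDerivAt.comp w (hasFDerivAt_prodMk_right y w)).hasFDerivWithinAt
  have hbound : ∀ w ∈ segment ℝ (0 : E) v,
      ‖(fderiv ℝ D (y, w)).comp (.inr ℝ E E) - ContinuousLinearMap.id ℝ E‖ ≤ L * ‖v‖ := by
    intro w hw
    have hid : ContinuousLinearMap.id ℝ E = (fderiv ℝ D (y, 0)).comp (.inr ℝ E E) := by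
      ext w; simp [hp1]
    rw [hid, ← ContinuousLinearMap.sub_comp]
    calc _ ≤ ‖fderiv ℝ D (y, w) - fderiv ℝ D (y, 0)‖ * ‖ContinuousLinearMap.inr ℝ E E‖ :=
          ContinuousLinearMap.opNorm_comp_le _ _
      _ ≤ ‖fderiv ℝ D (y, w) - fderiv ℝ D (y, 0)‖ * 1 := by
          gcongr; exact ContinuousLinearMap.norm_inr_le_one ℝ E E
      _ ≤ L * ‖v‖ := by
          rw [mul_one]
          refine (hL.norm_sub_le (hin w hw).1 (hin 0 (left_mem_segment ℝ 0 v)).1).trans ?_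
          gcongr
          simpa using hnorm w hw
  have := Convex.norm_image_sub_le_of_norm_hasFDerivWithin_le' hder hbound
    (convex_segment 0 v) (left_mem_segment ℝ 0 v) (right_mem_segment ℝ 0 v)
  simpa [hp0, pow_two, mul_assoc] using this

/-- First-order Taylor expansion of a solution of `ẋ = f(x)`, where the field `f` is only required
to be differentiable at the initial point. -/
lemma isBigO_solution {E : Type*} [NormedAddCommGroup E] [NormedSpace ℝ E]
    {f : E → E} {x : ℝ → E} (hf : DifferentiableAt ℝ f (x 0))
    (hx : ∀ᶠ t in 𝓝 0, HasDerivAt x (f (x t)) t) :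
    (fun t => x t - x 0 - t • f (x 0)) =O[𝓝 0] fun t : ℝ => t ^ 2 := by
  have hx0 : HasDerivAt x (f (x 0)) 0 := hx.self_of_nhds
  have hfx : (fun t => f (x t) - f (x 0)) =O[𝓝 0] fun t : ℝ => t := by
    have h := (hf.isBigO_sub.comp_tendsto hx0.continuousAt.tendsto).trans
      hx0.differentiableAt.isBigO_sub
    simpa [Function.comp_def] using h
  obtain ⟨C, hC, hfx⟩ := hfx.exists_pos
  obtain ⟨r, hr, hball⟩ := Metric.eventually_nhds_iff_ball.1 (hx.and hfx.bound)
  refine IsBigO.of_bound C ?_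
  filter_upwards [Metric.ball_mem_nhds (0 : ℝ) hr] with t ht
  have hsub : ∀ s ∈ segment ℝ (0 : ℝ) t, s ∈ Metric.ball (0 : ℝ) r := fun s hs =>
    (convex_ball (0 : ℝ) r).segment_subset (Metric.mem_ball_self hr) ht hs
  have hnorm : ∀ s ∈ segment ℝ (0 : ℝ) t, ‖s‖ ≤ ‖t‖ := by
    intro s hs
    have := (convex_closedBall (0 : ℝ) ‖t‖).segment_subset
      (Metric.mem_closedBall_self (norm_nonneg t)) (by simp) hs
    simpa using this
  have hder : ∀ s ∈ segment ℝ (0 : ℝ) t,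
      HasDerivWithinAt (fun s => x s - s • f (x 0)) (f (x s) - f (x 0)) (segment ℝ 0 t) s := by
    intro s hs
    have h := (hball s (hsub s hs)).1.sub ((hasDerivAt_id s).smul_const (f (x 0)))
    rw [one_smul] at h
    exact h.hasDerivWithinAt
  have hbd : ∀ s ∈ segment ℝ (0 : ℝ) t, ‖f (x s) - f (x 0)‖ ≤ C * ‖t‖ := fun s hs =>
    (hball s (hsub s hs)).2.trans (by gcongr; exact hnorm s hs)
  have := Convex.norm_image_sub_le_of_norm_hasDerivWithin_le hder hbd
    (convex_segment 0 t) (left_mem_segment ℝ 0 t) (right_mem_segment ℝ 0 t)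
  rw [norm_pow, pow_two, ← mul_assoc]
  simpa [sub_right_comm] using this

/-- The base point equation `G(h, y) = x₀` is solvable near `(0, x₀)` when `G(0, ·)` is the
identity, with a solution at distance `O(h)` from `x₀`. -/
lemma exists_basePoint {E : Type*} [NormedAddCommGroup E] [NormedSpace ℝ E] [CompleteSpace E]
    {G : ℝ × E → E} {x₀ : E} (hG : ContDiffAt ℝ 1 G (0, x₀))
    (h0 : ∀ᶠ y in 𝓝 x₀, G (0, y) = y) :
    ∃ y : ℝ → E, Tendsto y (𝓝 0) (𝓝 x₀) ∧ (∀ᶠ h in 𝓝 0, G (h, y h) = x₀) ∧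
      (fun h => y h - x₀) =O[𝓝 0] fun h : ℝ => h := by
  have hs := hG.hasStrictFDerivAt one_ne_zero
  -- differentiate `G(0, y) = y` in `y`
  have hpartial : (fderiv ℝ G (0, x₀)).comp (.inr ℝ ℝ E) = ContinuousLinearMap.id ℝ E := by
    have h1 : HasFDerivAt (fun y => G (0, y)) ((fderiv ℝ G (0, x₀)).comp (.inr ℝ ℝ E)) x₀ :=
      hs.hasFDerivAt.comp x₀ (hasFDerivAt_prodMk_right (0 : ℝ) x₀)
    exact h1.unique ((hasFDerivAt_id x₀).congr_of_eventuallyEq h0)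
  have hinv : ((fderiv ℝ G (0, x₀)).comp (.inr ℝ ℝ E)).IsInvertible := by
    rw [hpartial]
    exact ⟨ContinuousLinearEquiv.refl ℝ E, rfl⟩
  have hG0 : G (0, x₀) = x₀ := h0.self_of_nhds
  have htend := hs.tendsto_implicitFunctionOfProdDomain hinv
  have hsolve := hs.eventually_apply_implicitFunctionOfProdDomain hinv
  have hder := (hs.hasStrictFDerivAt_implicitFunctionOfProdDomain hinv).hasFDerivAt
  have hval : hs.implicitFunctionOfProdDomain hinv 0 = x₀ :=
    tendsto_nhds_unique hder.continuousAt.tendsto htend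
  refine ⟨_, htend, ?_, ?_⟩
  · simpa [hG0] using hsolve
  · simpa [hval] using hder.isBigO_sub

/-- The discretization scheme induced by a `C²` discretization map `Rd` (which is a
diffeomorphism from its domain `O` onto an open neighborhood `W` of the diagonal of `U × U`,
with inverse `S`) is first-order accurate: if `t ↦ x t` solves `ẋ = F(x, u)`, `x 0 = x₀`, then
there are `K > 0` and `h₀ > 0` such that for every step size `0 < h < h₀` there is an output
`x₁` of the scheme at `x₀` (i.e. `Rd (y, h • F (y, u)) = (x₀, x₁)` for some base point `y`)
with `‖x h − x₁‖ ≤ K h²`. -/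
theorem discretization_scheme_first_order {n m : ℕ}
    (U : Set (Fin n → ℝ)) (hU : IsOpen U)
    (O W : Set ((Fin n → ℝ) × (Fin n → ℝ)))
    (Rd S : ((Fin n → ℝ) × (Fin n → ℝ)) → ((Fin n → ℝ) × (Fin n → ℝ)))
    (hRd : IsC2DiscretizationMap U O Rd)
    -- `Rd` is a diffeomorphism from `O` onto the open neighborhood `W` of the diagonal:
    (hW : IsOpen W) (hdiag : ∀ x ∈ U, ((x, x)) ∈ W)
    (himage : Rd '' O = W)
    (hSsmooth : ContDiffOn ℝ 2 S W)
    (hSR : ∀ p ∈ O, S (Rd p) = p)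
    (hRS : ∀ q ∈ W, Rd (S q) = q)
    -- the controlled dynamics
    (F : ((Fin n → ℝ) × (Fin m → ℝ)) → (Fin n → ℝ))
    (hF : ContDiff ℝ 1 F)
    (u : Fin m → ℝ) (x₀ : Fin n → ℝ) (hx₀ : x₀ ∈ U)
    -- the exact solution of `ẋ = F(x,u)`, `x 0 = x₀`, defined on `(-ε, ε)`
    (ε : ℝ) (hε : 0 < ε) (x : ℝ → (Fin n → ℝ)) (hx0 : x 0 = x₀)
    (hsol : ∀ t ∈ Set.Ioo (-ε) ε, x t ∈ U ∧ HasDerivAt x (F (x t, u)) t) :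
    ∃ K > (0 : ℝ), ∃ h₀ > (0 : ℝ), h₀ ≤ ε ∧
      ∀ h : ℝ, 0 < h → h < h₀ →
        ∃ x₁ : Fin n → ℝ,
          (∃ y ∈ U, (y, h • F (y, u)) ∈ O ∧ Rd (y, h • F (y, u)) = (x₀, x₁)) ∧
          ‖x h - x₁‖ ≤ K * h ^ 2 := by
  obtain ⟨hO, hOU, hO0, hRsm, -, hR0, hRder⟩ := hRd
  have hUx : ∀ᶠ y in 𝓝 x₀, y ∈ U := hU.mem_nhds hx₀
  have hRat : ∀ p ∈ O, ContDiffAt ℝ 2 Rd p := fun p hp => hRsm.contDiffAt (hO.mem_nhds hp)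
  set f : (Fin n → ℝ) → (Fin n → ℝ) := fun y => F (y, u) with hf
  have hfC : ContDiff ℝ 1 f := hF.comp (contDiff_id.prodMk contDiff_const)
  have hfd : DifferentiableAt ℝ f x₀ := (hfC.differentiable one_ne_zero) x₀
  have hG : ContDiffAt ℝ 1
      (fun q : ℝ × (Fin n → ℝ) => (Rd (q.2, q.1 • f q.2)).1) (0, x₀) := by
    have hinner : ContDiff ℝ 1 (fun q : ℝ × (Fin n → ℝ) => (q.2, q.1 • f q.2)) :=
      contDiff_snd.prodMk (contDiff_fst.smul (hfC.comp contDiff_snd))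
    have hR1 : ContDiffAt ℝ 1 Rd ((fun q : ℝ × (Fin n → ℝ) => (q.2, q.1 • f q.2)) (0, x₀)) := by
      simpa using (hRat _ (hO0 x₀ hx₀)).of_le one_le_two
    exact (hR1.comp (0, x₀) hinner.contDiffAt).fst
  obtain ⟨y, hyt, hyG, hyO⟩ := exists_basePoint hG (hUx.mono fun z hz => by simp [hR0 z hz])
  have hfy : (fun h => f (y h) - f x₀) =O[𝓝 0] fun h : ℝ => h :=
    (hfd.isBigO_sub.comp_tendsto hyt).trans hyO
  have hp : Tendsto (fun h : ℝ => (y h, h • f (y h))) (𝓝 0) (𝓝 (x₀, 0)) := by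
    refine hyt.prodMk_nhds ?_
    simpa using tendsto_id.smul (hfd.continuousAt.tendsto.comp hyt)
  have hD : (fun p : (Fin n → ℝ) × (Fin n → ℝ) => ((Rd p).2 - (Rd p).1) - p.2)
      =O[𝓝 (x₀, 0)] fun p => ‖p.2‖ ^ 2 := by
    refine isBigO_sub_snd (D := fun p => (Rd p).2 - (Rd p).1) ?_ ?_ ?_
    · exact (hRat _ (hO0 x₀ hx₀)).snd.sub (hRat _ (hO0 x₀ hx₀)).fst
    · exact hUx.mono fun z hz => by simp [hR0 z hz]
    · refine hUx.mono fun z hz w => ?_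
      have hd : DifferentiableAt ℝ Rd (z, 0) := (hRat _ (hO0 z hz)).differentiableAt two_ne_zero
      have hi := hasFDerivAt_prodMk_right (𝕜 := ℝ) z (0 : Fin n → ℝ)
      have h2 := (hd.snd.hasFDerivAt.comp (0 : Fin n → ℝ) hi).fderiv
      have h1 := (hd.fst.hasFDerivAt.comp (0 : Fin n → ℝ) hi).fderiv
      have h := hRder z hz
      simp only [Function.comp_def] at h1 h2
      rw [h1, h2] at h
      rw [fderiv_fun_sub hd.snd hd.fst]
      simpa using DFunLike.congr_fun h w
  have hDp : (fun h : ℝ => ((Rd (y h, h • f (y h))).2 - (Rd (y h, h • f (y h))).1) - h • f (y h))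
      =O[𝓝 0] fun h : ℝ => h ^ 2 := by
    refine (hD.comp_tendsto hp).trans ?_
    have hb : (fun h : ℝ => h • f (y h)) =O[𝓝 0] fun h : ℝ => h := by
      simpa using (isBigO_refl (fun h : ℝ => h) (𝓝 0)).smul
        ((hfd.continuousAt.tendsto.comp hyt).isBigO_one ℝ)
    exact hb.norm_left.pow 2
  have hmid : (fun h : ℝ => h • (f (y h) - f x₀)) =O[𝓝 0] fun h : ℝ => h ^ 2 := by
    simpa [pow_two] using (isBigO_refl (fun h : ℝ => h) (𝓝 0)).smul hfy
  have hsolO : (fun t => x t - x₀ - t • f x₀) =O[𝓝 0] fun t : ℝ => t ^ 2 := by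
    have hev : ∀ᶠ t in 𝓝 (0 : ℝ), HasDerivAt x (f (x t)) t := by
      filter_upwards [Ioo_mem_nhds (neg_lt_zero.2 hε) hε] with t ht using (hsol t ht).2
    simpa [hx0] using isBigO_solution (f := f) (x := x) (by rwa [hx0]) hev
  obtain ⟨K, hK, hKb⟩ := ((hsolO.sub hmid).sub hDp).exists_pos
  have hall := hKb.bound.and (hyG.and (hp.eventually (hO.mem_nhds (hO0 x₀ hx₀))))
  obtain ⟨r, hr, hball⟩ := Metric.eventually_nhds_iff_ball.1 hall
  refine ⟨K, hK, min r ε, lt_min hr hε, min_le_right _ _, fun h hpos hlt => ?_⟩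
  obtain ⟨hb, hG1, hmem⟩ := hball h (by
    simpa [abs_of_pos hpos] using hlt.trans_le (min_le_left _ _))
  refine ⟨(Rd (y h, h • f (y h))).2, ⟨y h, (hOU hmem).1, hmem, Prod.ext hG1 rfl⟩, ?_⟩
  have hnorm : ‖h ^ 2‖ = h ^ 2 := by simp
  rw [hnorm] at hb
  simp only at hG1
  have hsplit : x h - (Rd (y h, h • f (y h))).2 = x h - x₀ - h • f x₀ - h • (f (y h) - f x₀) -
      ((Rd (y h, h • f (y h))).2 - (Rd (y h, h • f (y h))).1 - h • f (y h)) := by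
    rw [hG1, smul_sub]
    abel
  rw [hsplit]
  exact hb
end

section
/- Let ξ = (x₁, x₂, x₃, x₄, w) ∈ ℝ⁵ with 1 + x₃ − w·x₄ ≠ 0, and let v = (v₁, v₂) ∈ ℝ². Define F(ξ) = (x₂ + 2x₂(x₃ + x₄w), x₃ + x₄w, 0, (1 + x₃)w, 0), G₁ = (0,0,1,0,0), G₂ = (0,0,0,0,1), Φ(ξ) = (x₁ − x₂², x₂, x₃ + x₄w, x₄, (1 + x₃)w), and let μ = (μ₁, μ₂) be determined by the invertible linear system [[1, x₄],[w, 1 + x₃]]·μ = (v₁ − (1 + x₃)w², v₂). Then DΦ(ξ)·(F(ξ) + μ₁G₁ + μ₂G₂) = A·Φ(ξ) + B·v, where A ∈ ℝ^{5×5} and B ∈ ℝ^{5×2} are the matrices of the linear system ż₁ = z₂, ż₂ = z₃, ż₃ = v₁, ż₄ = z₅, ż₅ = v₂ (i.e., A has ones in entries (1,2), (2,3), (4,5) and zeros elsewhere, and B has ones in entries (3,1), (5,2) and zeros elsewhere). -/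
/-!
The rows of `DΦ(ξ)` are written out with the product rule and applied to the vector
`F(ξ) + μ₁G₁ + μ₂G₂`. In the first row the term `-2x₂ẋ₂` cancels the nonlinear part of `ẋ₁`; the
third and fifth rows are `μ₁ + x₄μ₂ + (1 + x₃)w²` and `wμ₁ + (1 + x₃)μ₂`, which equal `v₁` and
`v₂` by the equations defining the feedback.
-/

open Matrix

/-- The coordinate change `Φ` together with the feedback `μ = β(ξ)⁻¹·(v₁ − (1+x₃)w², v₂)`
transforms the extended system `ξ̇ = F(ξ) + μ₁G₁ + μ₂G₂` into the Brunovský form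
`ż = Az + Bv`: pointwise, `DΦ(ξ)·(F(ξ) + μ₁G₁ + μ₂G₂) = A·Φ(ξ) + B·v`. -/
theorem linearizing_identity
    (F : (Fin 5 → ℝ) → (Fin 5 → ℝ)) (G₁ G₂ : Fin 5 → ℝ)
    (Φ : (Fin 5 → ℝ) → (Fin 5 → ℝ))
    (A : Matrix (Fin 5) (Fin 5) ℝ) (B : Matrix (Fin 5) (Fin 2) ℝ)
    (hF : F = fun p => ![p 1 + 2 * p 1 * (p 2 + p 3 * p 4), p 2 + p 3 * p 4, 0,
      (1 + p 2) * p 4, 0])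
    (hG₁ : G₁ = ![0, 0, 1, 0, 0]) (hG₂ : G₂ = ![0, 0, 0, 0, 1])
    (hΦ : Φ = fun p => ![p 0 - (p 1) ^ 2, p 1, p 2 + p 3 * p 4, p 3, (1 + p 2) * p 4])
    (hA : A = !![0, 1, 0, 0, 0; 0, 0, 1, 0, 0; 0, 0, 0, 0, 0; 0, 0, 0, 0, 1; 0, 0, 0, 0, 0])
    (hB : B = !![0, 0; 0, 0; 1, 0; 0, 0; 0, 1])
    (ξ : Fin 5 → ℝ) (hreg : 1 + ξ 2 - ξ 4 * ξ 3 ≠ 0)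
    (v : Fin 2 → ℝ) (μ : Fin 2 → ℝ)
    (hμ1 : μ 0 + ξ 3 * μ 1 = v 0 - (1 + ξ 2) * (ξ 4) ^ 2)
    (hμ2 : ξ 4 * μ 0 + (1 + ξ 2) * μ 1 = v 1) :
    fderiv ℝ Φ ξ (F ξ + μ 0 • G₁ + μ 1 • G₂) = A *ᵥ Φ ξ + B *ᵥ v := by
  subst hF hG₁ hG₂ hΦ hA hB
  -- `π i` is the differential `dξᵢ`; the entries of the vector in `hD` are the rows of `DΦ(ξ)`.
  let π : Fin 5 → ((Fin 5 → ℝ) →L[ℝ] ℝ) := fun i => ContinuousLinearMap.proj i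
  have hπ : ∀ i : Fin 5, HasFDerivAt (fun p : Fin 5 → ℝ => p i) (π i) ξ :=
    fun i => hasFDerivAt_apply i ξ
  have hD : HasFDerivAt
      (fun p : Fin 5 → ℝ =>
        ![p 0 - (p 1) ^ 2, p 1, p 2 + p 3 * p 4, p 3, (1 + p 2) * p 4])
      (ContinuousLinearMap.pi (![π 0 - (2 * ξ 1) • π 1, π 1,
        π 2 + (ξ 3 • π 4 + ξ 4 • π 3), π 3,
        (1 + ξ 2) • π 4 + ξ 4 • π 2] : Fin 5 → ((Fin 5 → ℝ) →L[ℝ] ℝ))) ξ := by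
    rw [hasFDerivAt_pi]
    intro i
    fin_cases i
    · have h := (hπ 0).sub ((hπ 1).pow 2)
      simp only [Nat.cast_ofNat, Nat.add_one_sub_one, pow_one, nsmul_eq_mul] at h
      exact h
    · exact hπ 1
    · exact (hπ 2).add ((hπ 3).mul (hπ 4))
    · exact hπ 3
    · exact ((hπ 2).const_add 1).mul (hπ 4)
  rw [hD.fderiv]
  ext i
  fin_cases i <;> simp [π, dotProduct, Fin.sum_univ_succ]
  -- Rows 1, 2 and 4 hold identically; in rows 3 and 5 the inputs appear through the equations defining the feedback `μ`.
  · linear_combination hμ1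
  · linear_combination hμ2
end

section
/- Let I ⊆ ℝ be an open interval and let t ↦ ξ(t) = (x₁(t), x₂(t), x₃(t), x₄(t), w(t)) be a C¹ curve in ℝ⁵ with 1 + x₃(t) − w(t)·x₄(t) ≠ 0 for all t ∈ I, and let t ↦ v(t) = (v₁(t), v₂(t)) ∈ ℝ² be continuous. Suppose ξ satisfies ξ̇(t) = F(ξ(t)) + μ₁(t)G₁ + μ₂(t)G₂, where F(ξ) = (x₂ + 2x₂(x₃ + x₄w), x₃ + x₄w, 0, (1 + x₃)w, 0), G₁ = (0,0,1,0,0), G₂ = (0,0,0,0,1), and μ(t) is determined by [[1, x₄(t)],[w(t), 1 + x₃(t)]]·μ(t) = (v₁(t) − (1 + x₃(t))w(t)², v₂(t)). Then the curve z(t) := Φ(ξ(t)) = (x₁(t) − x₂(t)², x₂(t), x₃(t) + x₄(t)w(t), x₄(t), (1 + x₃(t))w(t)) satisfies ż₁ = z₂, ż₂ = z₃, ż₃ = v₁, ż₄ = z₅, ż₅ = v₂ on I. -/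
/-!
Each component of the ODE is a scalar derivative, and the claim is the chain rule applied to each
component of `Φ`. In `x₁ - x₂²` the terms `2x₂(x₃ + x₄w)` cancel; the derivatives of `x₃ + x₄w` and
`(1 + x₃)w` are `μ₁ + x₄μ₂ + (1 + x₃)w²` and `wμ₁ + (1 + x₃)μ₂`, which equal `v₁` and `v₂` by the
linear system defining `μ`.
-/

/-- Trajectory-level linearization: if a `C¹` curve `ξ = (x₁,x₂,x₃,x₄,w)` on an open interval
`I`, with `1 + x₃ − w·x₄ ≠ 0` on `I`, solves `ξ̇ = F(ξ) + μ₁G₁ + μ₂G₂` where `μ` solves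
`[[1, x₄],[w, 1+x₃]]·μ = (v₁ − (1+x₃)w², v₂)`, then `z := Φ(ξ)` solves the Brunovský system
`ż₁ = z₂, ż₂ = z₃, ż₃ = v₁, ż₄ = z₅, ż₅ = v₂` on `I`. -/
theorem trajectory_linearization
    (a b : ℝ) (I : Set ℝ) (hI : I = Set.Ioo a b)
    (F : (Fin 5 → ℝ) → (Fin 5 → ℝ)) (G₁ G₂ : Fin 5 → ℝ)
    (hF : F = fun p => ![p 1 + 2 * p 1 * (p 2 + p 3 * p 4), p 2 + p 3 * p 4, 0,
      (1 + p 2) * p 4, 0])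
    (hG₁ : G₁ = ![0, 0, 1, 0, 0]) (hG₂ : G₂ = ![0, 0, 0, 0, 1])
    (ξ : ℝ → (Fin 5 → ℝ)) (v μ : ℝ → (Fin 2 → ℝ))
    (hv : ContinuousOn v I)
    (hreg : ∀ t ∈ I, 1 + ξ t 2 - ξ t 4 * ξ t 3 ≠ 0)
    (hμ1 : ∀ t ∈ I, μ t 0 + ξ t 3 * μ t 1 = v t 0 - (1 + ξ t 2) * (ξ t 4) ^ 2)
    (hμ2 : ∀ t ∈ I, ξ t 4 * μ t 0 + (1 + ξ t 2) * μ t 1 = v t 1)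
    (hode : ∀ t ∈ I, HasDerivAt ξ (F (ξ t) + μ t 0 • G₁ + μ t 1 • G₂) t) :
    ∀ t ∈ I,
      HasDerivAt (fun s => ξ s 0 - (ξ s 1) ^ 2) (ξ t 1) t ∧
      HasDerivAt (fun s => ξ s 1) (ξ t 2 + ξ t 3 * ξ t 4) t ∧
      HasDerivAt (fun s => ξ s 2 + ξ s 3 * ξ s 4) (v t 0) t ∧
      HasDerivAt (fun s => ξ s 3) ((1 + ξ t 2) * ξ t 4) t ∧
      HasDerivAt (fun s => (1 + ξ s 2) * ξ s 4) (v t 1) t := by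
  intro t ht
  have h := hasDerivAt_pi.1 (hode t ht)
  have h0 : HasDerivAt (fun s => ξ s 0) (ξ t 1 + 2 * ξ t 1 * (ξ t 2 + ξ t 3 * ξ t 4)) t := by
    simpa [hF, hG₁, hG₂] using h 0
  have h1 : HasDerivAt (fun s => ξ s 1) (ξ t 2 + ξ t 3 * ξ t 4) t := by
    simpa [hF, hG₁, hG₂] using h 1
  have h2 : HasDerivAt (fun s => ξ s 2) (μ t 0) t := by
    simpa [hF, hG₁, hG₂] using h 2
  have h3 : HasDerivAt (fun s => ξ s 3) ((1 + ξ t 2) * ξ t 4) t := by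
    simpa [hF, hG₁, hG₂] using h 3
  have h4 : HasDerivAt (fun s => ξ s 4) (μ t 1) t := by
    simpa [hF, hG₁, hG₂] using h 4
  refine ⟨?_, h1, ?_, h3, ?_⟩
  · refine (h0.fun_sub (h1.fun_pow 2)).congr_deriv ?_
    norm_num
  -- The two equations defining `μ` are exactly what turns the product rule into `v`.
  · refine (h2.fun_add (h3.fun_mul h4)).congr_deriv ?_
    linear_combination hμ1 t ht
  · refine ((h2.const_add 1).fun_mul h4).congr_deriv ?_
    linear_combination hμ2 t ht
end

section
/- Let M, N ⊆ ℝⁿ be open sets and Φ : M → N a diffeomorphism. Define R_Φ : N × ℝⁿ → N × ℝⁿ... by R_Φ(z, ż) := (z, z + ż), restricted to the open set of (z, ż) with z + ż ∈ N; R_Φ is a discretization map on N. Then the lifted map R(ξ, ξ̇) := ((Φ⁻¹ × Φ⁻¹) ∘ R_Φ ∘ TΦ)(ξ, ξ̇) = (ξ, Φ⁻¹(Φ(ξ) + DΦ(ξ)·ξ̇)), defined on the open set of (ξ, ξ̇) ∈ M × ℝⁿ with Φ(ξ) + DΦ(ξ)·ξ̇ ∈ N, is a discretization map on M. -/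
/-- Smoothness on `M × ℝⁿ` of the second component of the Euler step after the tangent lift. -/
lemma contDiffOn_add_fderiv {n : ℕ} {M : Set (Fin n → ℝ)} (hM : IsOpen M)
    {Φ : (Fin n → ℝ) → (Fin n → ℝ)} (hΦ : ContDiffOn ℝ (⊤ : ℕ∞) Φ M) :
    ContDiffOn ℝ (⊤ : ℕ∞)
      (fun p : (Fin n → ℝ) × (Fin n → ℝ) => Φ p.1 + fderiv ℝ Φ p.1 p.2)
      (M ×ˢ Set.univ) := by
  have hfst : Set.MapsTo (Prod.fst : (Fin n → ℝ) × (Fin n → ℝ) → (Fin n → ℝ))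
      (M ×ˢ Set.univ) M := fun p hp => hp.1
  have hD : ContDiffOn ℝ (⊤ : ℕ∞) (fderiv ℝ Φ) M := hΦ.fderiv_of_isOpen hM (by simp)
  exact (hΦ.comp contDiff_fst.contDiffOn hfst).add
    ((hD.comp contDiff_fst.contDiffOn hfst).clm_apply contDiff_snd.contDiffOn)

/-- The inverse relation `Ψ ∘ Φ = id` on the open set `M`, differentiated. -/
lemma fderiv_comp_eq_id {n : ℕ} {M : Set (Fin n → ℝ)} (hM : IsOpen M)
    {Φ Ψ : (Fin n → ℝ) → (Fin n → ℝ)} (hΨΦ : ∀ ξ ∈ M, Ψ (Φ ξ) = ξ)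
    {x : Fin n → ℝ} (hx : x ∈ M) (hΦ : DifferentiableAt ℝ Φ x)
    (hΨ : DifferentiableAt ℝ Ψ (Φ x)) :
    (fderiv ℝ Ψ (Φ x)).comp (fderiv ℝ Φ x) = ContinuousLinearMap.id ℝ (Fin n → ℝ) := by
  have hid : Ψ ∘ Φ =ᶠ[nhds x] id := by
    filter_upwards [hM.mem_nhds hx] with ξ hξ using hΨΦ ξ hξ
  rw [← fderiv_comp x hΨ hΦ, hid.fderiv_eq, fderiv_id]

/-- The Euler-type map `R_Φ(z, ż) := (z, z + ż)` (restricted to `{(z,ż) | z ∈ N, z + ż ∈ N}`)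
is a discretization map on `N`, and its lift
`R(ξ, ξ̇) := ((Φ⁻¹ × Φ⁻¹) ∘ R_Φ ∘ TΦ)(ξ, ξ̇) = (ξ, Φ⁻¹(Φ(ξ) + DΦ(ξ)·ξ̇))` through a
diffeomorphism `Φ : M → N` is a discretization map on `M`. -/
theorem lifted_euler_discretization_map {n : ℕ}
    (M N : Set (Fin n → ℝ)) (hM : IsOpen M) (hN : IsOpen N)
    (Φ Ψ : (Fin n → ℝ) → (Fin n → ℝ))
    (hΦsmooth : ContDiffOn ℝ (⊤ : ℕ∞) Φ M)
    (hΨsmooth : ContDiffOn ℝ (⊤ : ℕ∞) Ψ N)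
    (hΦmaps : Φ '' M = N)
    (hΨΦ : ∀ ξ ∈ M, Ψ (Φ ξ) = ξ)
    (hΦΨ : ∀ z ∈ N, Φ (Ψ z) = z) :
    IsDiscretizationMap N
      {p : (Fin n → ℝ) × (Fin n → ℝ) | p.1 ∈ N ∧ p.1 + p.2 ∈ N}
      (fun p => (p.1, p.1 + p.2)) ∧
    IsDiscretizationMap M
      {p : (Fin n → ℝ) × (Fin n → ℝ) | p.1 ∈ M ∧ Φ p.1 + fderiv ℝ Φ p.1 p.2 ∈ N}
      (fun p => (p.1, Ψ (Φ p.1 + fderiv ℝ Φ p.1 p.2))) := by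
  have hmaps : ∀ ξ ∈ M, Φ ξ ∈ N := fun ξ hξ => hΦmaps ▸ Set.mem_image_of_mem Φ hξ
  have hΨmaps : ∀ z ∈ N, Ψ z ∈ M := by
    intro z hz
    rw [← hΦmaps] at hz
    obtain ⟨ξ, hξ, rfl⟩ := hz
    rwa [hΨΦ ξ hξ]
  refine ⟨⟨?_, fun p hp => ⟨hp.1, trivial⟩, fun x hx => ⟨hx, by simpa using hx⟩,
    by fun_prop, fun p hp => hp, fun x _ => by simp, fun x _ => ?_⟩, ?_⟩
  · exact (hN.preimage continuous_fst).inter (hN.preimage (continuous_fst.add continuous_snd))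
  · have h2 : HasFDerivAt (fun v => x + v) (ContinuousLinearMap.id ℝ (Fin n → ℝ)) 0 :=
      (hasFDerivAt_id 0).const_add x
    simpa using h2.fderiv
  have hT := contDiffOn_add_fderiv hM hΦsmooth
  refine ⟨?_, fun p hp => ⟨hp.1, trivial⟩, fun x hx => ⟨hx, by simpa using hmaps x hx⟩,
    ?_, fun p hp => ⟨hp.1, hΨmaps _ hp.2⟩, fun x hx => by simp [hΨΦ x hx], fun x hx => ?_⟩
  · have h := hT.continuousOn.isOpen_inter_preimage (hM.prod isOpen_univ) hN
    have hset : {p : (Fin n → ℝ) × (Fin n → ℝ) | p.1 ∈ M ∧ Φ p.1 + fderiv ℝ Φ p.1 p.2 ∈ N} =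
        M ×ˢ Set.univ ∩ (fun p => Φ p.1 + fderiv ℝ Φ p.1 p.2) ⁻¹' N :=
      Set.ext fun p => ⟨fun hp => ⟨⟨hp.1, trivial⟩, hp.2⟩, fun hp => ⟨hp.1.1, hp.2⟩⟩
    rwa [hset]
  · refine contDiff_fst.contDiffOn.prodMk (hΨsmooth.comp (hT.mono ?_) ?_)
    · exact fun p hp => ⟨hp.1, trivial⟩
    · exact fun p hp => hp.2
  · have hΦx : DifferentiableAt ℝ Φ x :=
      (hΦsmooth.contDiffAt (hM.mem_nhds hx)).differentiableAt (by simp)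
    have hΨx : DifferentiableAt ℝ Ψ (Φ x) :=
      (hΨsmooth.contDiffAt (hN.mem_nhds (hmaps x hx))).differentiableAt (by simp)
    have hstep : HasFDerivAt (fun v => Φ x + fderiv ℝ Φ x v) (fderiv ℝ Φ x) 0 :=
      (fderiv ℝ Φ x).hasFDerivAt.const_add (Φ x)
    have hΨ0 : HasFDerivAt Ψ (fderiv ℝ Ψ (Φ x)) (Φ x + fderiv ℝ Φ x 0) := by
      simpa using hΨx.hasFDerivAt
    have h2 : fderiv ℝ (fun v => Ψ (Φ x + fderiv ℝ Φ x v)) 0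
        = (fderiv ℝ Ψ (Φ x)).comp (fderiv ℝ Φ x) := (hΨ0.comp 0 hstep).fderiv
    have h1 : fderiv ℝ (fun _ : Fin n → ℝ => x) 0 = 0 := fderiv_const_apply x
    change fderiv ℝ (fun v => Ψ (Φ x + fderiv ℝ Φ x v)) 0
      - fderiv ℝ (fun _ : Fin n → ℝ => x) 0 = _
    rw [h2, h1, sub_zero, fderiv_comp_eq_id hM hΨΦ hx hΦx hΨx]
end

section
/- Let h > 0 and let ξ_k = (x₁, x₂, x₃, x₄, w) ∈ ℝ⁵ be a point where Φ(ξ) := (x₁ − x₂², x₂, x₃ + x₄w, x₄, (1 + x₃)w) is a local diffeomorphism (i.e., 1 + x₃ − w·x₄ ≠ 0). Let v_k = (v₁, v₂) ∈ ℝ², let μ_k solve [[1, x₄],[w, 1 + x₃]]·μ_k = (v₁ − (1 + x₃)w², v₂), and suppose ξ_{k+1} ∈ ℝ⁵ satisfies Φ(ξ_{k+1}) = Φ(ξ_k) + h·DΦ(ξ_k)·(F(ξ_k) + μ_k¹G₁ + μ_k²G₂), where F(ξ) = (x₂ + 2x₂(x₃ + x₄w), x₃ + x₄w, 0, (1 +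 x₃)w, 0), G₁ = (0,0,1,0,0), G₂ = (0,0,0,0,1). Then, writing z_k := Φ(ξ_k) and z_{k+1} := Φ(ξ_{k+1}), one has z_{k+1} = (I + hA)·z_k + hB·v_k, where A ∈ ℝ^{5×5} has ones in entries (1,2), (2,3), (4,5) and zeros elsewhere and B ∈ ℝ^{5×2} has ones in entries (3,1), (5,2) and zeros elsewhere; i.e., componentwise z_{k+1}¹ = z_k¹ + h z_k², z_{k+1}² = z_k² + h z_k³, z_{k+1}³ = z_k³ + h v₁, z_{k+1}⁴ = z_k⁴ + h z_k⁵, z_{k+1}⁵ = z_k⁵ + h v₂. -/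
open Matrix

/-! The derivative of `Φ` along the closed-loop vector field is linear in `z = Φ(ξ)` and `v`:
`DΦ(ξ)(F + μ¹G₁ + μ²G₂) = (z², z³, v¹, z⁵, v²)`. Indeed the term `2x₂(x₃ + x₄w)` of `F` cancels
against the derivative of `-x₂²`, while the third and fifth components are the left-hand sides of
the two feedback equations (the third one shifted by `(1 + x₃)w²`). The lemma `fderiv_Phi_apply`
computes `DΦ`, and `linear_update_eq` writes `(I + hA)z + hBv` in coordinates. -/

/-- The Jacobian of `Φ` at `x`, applied to a direction `d`. -/
lemma fderiv_Phi_apply (x d : Fin 5 → ℝ) :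
    fderiv ℝ (fun p : Fin 5 → ℝ =>
      ![p 0 - (p 1) ^ 2, p 1, p 2 + p 3 * p 4, p 3, (1 + p 2) * p 4]) x d =
    ![d 0 - 2 * x 1 * d 1, d 1, d 2 + (x 3 * d 4 + x 4 * d 3), d 3,
      (1 + x 2) * d 4 + x 4 * d 2] := by
  have hc (i : Fin 5) : HasFDerivAt (fun p : Fin 5 → ℝ => p i)
      (ContinuousLinearMap.proj (R := ℝ) (φ := fun _ : Fin 5 => ℝ) i) x :=
    hasFDerivAt_apply i x
  have h0 := (hc 0).sub ((hc 1).pow 2)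
  have h2 := (hc 2).add ((hc 3).mul (hc 4))
  have h4 := ((hc 2).const_add 1).mul (hc 4)
  have key := hasFDerivAt_pi.2 (show ∀ i : Fin 5, HasFDerivAt
      (fun p : Fin 5 → ℝ =>
        (![p 0 - (p 1) ^ 2, p 1, p 2 + p 3 * p 4, p 3, (1 + p 2) * p 4] : Fin 5 → ℝ) i)
      ((![_, _, _, _, _] : Fin 5 → ((Fin 5 → ℝ) →L[ℝ] ℝ)) i) x from
    Fin.forall_fin_succ.2 ⟨h0, Fin.forall_fin_succ.2 ⟨hc 1, Fin.forall_fin_succ.2 ⟨h2,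
      Fin.forall_fin_succ.2 ⟨hc 3, Fin.forall_fin_succ.2 ⟨h4, fun i => i.elim0⟩⟩⟩⟩⟩)
  rw [key.fderiv]
  ext i
  fin_cases i <;> simp

/-- The linear update `(I + hA)z + hBv`, written out in coordinates. -/
lemma linear_update_eq (h : ℝ) (z : Fin 5 → ℝ) (v : Fin 2 → ℝ) :
    ((1 : Matrix (Fin 5) (Fin 5) ℝ) + h • !![0, 1, 0, 0, 0; 0, 0, 1, 0, 0; 0, 0, 0, 0, 0;
      0, 0, 0, 0, 1; 0, 0, 0, 0, 0]) *ᵥ z + (h • !![0, 0; 0, 0; 1, 0; 0, 0; 0, 1]) *ᵥ v =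
    ![z 0 + h * z 1, z 1 + h * z 2, z 2 + h * v 0, z 3 + h * z 4, z 4 + h * v 1] := by
  rw [Matrix.add_mulVec, Matrix.one_mulVec, Matrix.smul_mulVec, Matrix.smul_mulVec]
  ext i
  fin_cases i <;> simp [dotProduct, Fin.sum_univ_five] <;> rfl

/-- One step of the lifted discretization scheme
`Φ(ξ_{k+1}) = Φ(ξ_k) + h·DΦ(ξ_k)·(F(ξ_k) + μ¹G₁ + μ²G₂)` together with the linearizing
feedback `[[1,x₄],[w,1+x₃]]·μ = (v₁ − (1+x₃)w², v₂)` yields, in the coordinates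
`z = Φ(ξ)`, the linear discrete-time update `z_{k+1} = (I + hA)z_k + hB v_k`. -/
theorem discrete_step_linearizes
    (h : ℝ) (hh : 0 < h)
    (F : (Fin 5 → ℝ) → (Fin 5 → ℝ)) (G₁ G₂ : Fin 5 → ℝ)
    (Φ : (Fin 5 → ℝ) → (Fin 5 → ℝ))
    (A : Matrix (Fin 5) (Fin 5) ℝ) (B : Matrix (Fin 5) (Fin 2) ℝ)
    (hF : F = fun p => ![p 1 + 2 * p 1 * (p 2 + p 3 * p 4), p 2 + p 3 * p 4, 0,
      (1 + p 2) * p 4, 0])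
    (hG₁ : G₁ = ![0, 0, 1, 0, 0]) (hG₂ : G₂ = ![0, 0, 0, 0, 1])
    (hΦ : Φ = fun p => ![p 0 - (p 1) ^ 2, p 1, p 2 + p 3 * p 4, p 3, (1 + p 2) * p 4])
    (hA : A = !![0, 1, 0, 0, 0; 0, 0, 1, 0, 0; 0, 0, 0, 0, 0; 0, 0, 0, 0, 1; 0, 0, 0, 0, 0])
    (hB : B = !![0, 0; 0, 0; 1, 0; 0, 0; 0, 1])
    (ξk ξk1 : Fin 5 → ℝ) (hreg : 1 + ξk 2 - ξk 4 * ξk 3 ≠ 0)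
    (v μ : Fin 2 → ℝ)
    (hμ1 : μ 0 + ξk 3 * μ 1 = v 0 - (1 + ξk 2) * (ξk 4) ^ 2)
    (hμ2 : ξk 4 * μ 0 + (1 + ξk 2) * μ 1 = v 1)
    (hstep : Φ ξk1 = Φ ξk + h • (fderiv ℝ Φ ξk (F ξk + μ 0 • G₁ + μ 1 • G₂))) :
    Φ ξk1 = ((1 : Matrix (Fin 5) (Fin 5) ℝ) + h • A) *ᵥ Φ ξk + (h • B) *ᵥ v ∧
    (Φ ξk1 0 = Φ ξk 0 + h * Φ ξk 1 ∧
     Φ ξk1 1 = Φ ξk 1 + h * Φ ξk 2 ∧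
     Φ ξk1 2 = Φ ξk 2 + h * v 0 ∧
     Φ ξk1 3 = Φ ξk 3 + h * Φ ξk 4 ∧
     Φ ξk1 4 = Φ ξk 4 + h * v 1) := by
  subst hF hG₁ hG₂ hΦ hA hB
  rw [fderiv_Phi_apply] at hstep
  have comp (i : Fin 5) := congrFun hstep i
  have e0 := comp 0
  have e1 := comp 1
  have e2 := comp 2
  have e3 := comp 3
  have e4 := comp 4
  simp at e0 e1 e2 e3 e4
  refine and_iff_right_of_imp ?_ |>.2 ?_
  · rintro ⟨h0, h1, h2, h3, h4⟩
    rw [linear_update_eq]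
    ext i
    fin_cases i
    exacts [h0, h1, h2, h3, h4]
  · refine ⟨?_, ?_, ?_, ?_, ?_⟩ <;> simp
    · linear_combination e0
    · linear_combination e1
    · linear_combination e2 + h * hμ1
    · linear_combination e3
    · linear_combination e4 + h * hμ2
end
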